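/- Let 𝒢 = (V,E) be a simple directed graph and let C ⊆ V. Then 𝒢 is identifiable from C if and only if for every i ∈ V and every admissible network matrix G over ℝ(z), the submatrix T_{C, N_i} of T := (I − G)⁻¹ has rank |N_i| over the field ℝ(z). -/

import Mathlib

open Polynomial Matrix

noncomputable section

/-- A rational function `f ∈ ℝ(z)` is *proper* if the degree of its numerator is at most
the degree of its denominator. -/
def Proper (f : RatFunc ℝ) : Prop := f.num.degree ≤ f.denom.degree

/-- A rational function `f ∈ ℝ(z)` is *strictly proper* if the degree of its numerator is
strictly less than the degree of its denominator. -/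
def StrictlyProper (f : RatFunc ℝ) : Prop := f.num.degree < f.denom.degree

/-- The (finite) limit at infinity of a proper rational function: the ratio of leading
coefficients when the degrees of numerator and denominator coincide, and `0` otherwise. -/
def limAtInfty (f : RatFunc ℝ) : ℝ :=
  if f.num.degree = f.denom.degree then f.num.leadingCoeff / f.denom.leadingCoeff else 0

/-- The set `N_i` of out-neighbours of node `i` in the directed graph with edge set `E`. -/
def Nout {n : ℕ} (E : Finset (Fin n × Fin n)) (i : Fin n) : Finset (Fin n) :=
  Finset.univ.filter fun j => (i, j) ∈ E

/-- The real matrix `lim_{z→∞} (I - G(z))`, taken entrywise. -/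
def limMatrix {n : ℕ} (G : Matrix (Fin n) (Fin n) (RatFunc ℝ)) : Matrix (Fin n) (Fin n) ℝ :=
  Matrix.of fun a b => limAtInfty ((1 - G) a b)

/-- A network matrix `G` over `ℝ(z)` is *admissible* for the graph with edge set `E` if
(P1) every entry is proper, (P2) `G j i ≠ 0` iff `(i,j) ∈ E`, and
(P3) every principal minor of `lim_{z→∞}(I - G(z))` is nonzero. -/
def Admissible {n : ℕ} (E : Finset (Fin n × Fin n))
    (G : Matrix (Fin n) (Fin n) (RatFunc ℝ)) : Prop :=
  (∀ i j : Fin n, Proper (G j i)) ∧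
  (∀ i j : Fin n, G j i ≠ 0 ↔ (i, j) ∈ E) ∧
  (∀ S : Finset (Fin n),
    ((limMatrix G).submatrix (fun x : {v // v ∈ S} => (x : Fin n))
      (fun x : {v // v ∈ S} => (x : Fin n))).det ≠ 0)

/-- The rows of `A` and `B` indexed by the subset `C` agree, i.e. `C·A = C·B` where `C`
also denotes the selection matrix of `C`. -/
def rowsAgree {n : ℕ} (C : Finset (Fin n)) (A B : Matrix (Fin n) (Fin n) (RatFunc ℝ)) : Prop :=
  A.submatrix (fun c : {v // v ∈ C} => (c : Fin n)) id
    = B.submatrix (fun c : {v // v ∈ C} => (c : Fin n)) id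

/-- `(i, N_i)` is identifiable from the measured node set `C`. -/
def IdentifiableNode {n : ℕ} (E : Finset (Fin n × Fin n)) (i : Fin n)
    (C : Finset (Fin n)) : Prop :=
  ∀ G Gbar : Matrix (Fin n) (Fin n) (RatFunc ℝ),
    Admissible E G → Admissible E Gbar →
    rowsAgree C (1 - G)⁻¹ (1 - Gbar)⁻¹ → ∀ j : Fin n, G j i = Gbar j i

/-- The graph is identifiable from the measured node set `C`. -/
def IdentifiableGraph {n : ℕ} (E : Finset (Fin n × Fin n)) (C : Finset (Fin n)) : Prop :=
  ∀ G Gbar : Matrix (Fin n) (Fin n) (RatFunc ℝ),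
    Admissible E G → Admissible E Gbar →
    rowsAgree C (1 - G)⁻¹ (1 - Gbar)⁻¹ → G = Gbar

open WithZero

open Classical in
/-- The valuation at infinity on `ℝ(z)`. -/
def vInf : Valuation (RatFunc ℝ) (WithZero (Multiplicative ℤ)) := RatFunc.inftyValuation ℝ

lemma vInf_of_ne {f : RatFunc ℝ} (hf : f ≠ 0) : vInf f = exp f.intDegree := by
  classical
  unfold vInf
  rw [RatFunc.inftyValuation_apply, RatFunc.inftyValuation_of_nonzero _ hf]

lemma vInf_C {c : ℝ} (hc : c ≠ 0) : vInf (RatFunc.C c) = 1 := by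
  classical
  unfold vInf
  exact RatFunc.inftyValuation.C _ hc

lemma vInf_poly {p : ℝ[X]} (hp : p ≠ 0) :
    vInf (algebraMap ℝ[X] (RatFunc ℝ) p) = exp (p.natDegree : ℤ) := by
  classical
  unfold vInf
  rw [RatFunc.inftyValuation_apply]
  exact RatFunc.inftyValuation.polynomial _ hp

lemma vInf_poly_lt {p q : ℝ[X]} (hq : q ≠ 0) (h : p.degree < q.degree) :
    vInf (algebraMap ℝ[X] (RatFunc ℝ) p / algebraMap ℝ[X] (RatFunc ℝ) q) < 1 := by
  by_cases hp : p = 0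
  · simp [hp]
  · rw [map_div₀, vInf_poly hp, vInf_poly hq, ← exp_sub, ← exp_zero, exp_lt_exp]
    have := Polynomial.natDegree_lt_natDegree hp h
    omega

lemma proper_iff (f : RatFunc ℝ) : Proper f ↔ vInf f ≤ 1 := by
  unfold Proper
  by_cases hf : f = 0
  · simp [hf]
  · rw [vInf_of_ne hf, ← exp_zero, exp_le_exp, RatFunc.intDegree,
      Polynomial.degree_eq_natDegree (RatFunc.num_ne_zero hf),
      Polynomial.degree_eq_natDegree f.denom_ne_zero, Nat.cast_le]
    omega

lemma lim_spec {f : RatFunc ℝ} (hf : Proper f) :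
    vInf (f - RatFunc.C (limAtInfty f)) < 1 := by
  have hd := f.denom_ne_zero
  have hd' : algebraMap ℝ[X] (RatFunc ℝ) f.denom ≠ 0 := by
    simpa using hd
  have key : f - RatFunc.C (limAtInfty f) =
      algebraMap ℝ[X] (RatFunc ℝ) (f.num - Polynomial.C (limAtInfty f) * f.denom) /
        algebraMap ℝ[X] (RatFunc ℝ) f.denom := by
    rw [map_sub, map_mul, RatFunc.algebraMap_C, sub_div, RatFunc.num_div_denom,
      mul_div_cancel_right₀ _ hd']
  rw [key]
  apply vInf_poly_lt hd
  have hm : f.denom.leadingCoeff = 1 := f.monic_denom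
  unfold limAtInfty
  split_ifs with h
  · have hn : f.num ≠ 0 := by
      intro h0
      rw [h0, Polynomial.degree_zero] at h
      exact hd (Polynomial.degree_eq_bot.1 h.symm)
    have hl : f.num.leadingCoeff ≠ 0 := by simpa using hn
    rw [hm, div_one, ← h]
    apply Polynomial.degree_sub_lt_left
    · rw [Polynomial.degree_C_mul hl, h]
    · exact hn
    · simp [hm]
  · simpa using lt_of_le_of_ne hf h

lemma lim_unique {f : RatFunc ℝ} {L : ℝ} (h : vInf (f - RatFunc.C L) < 1) :
    Proper f ∧ limAtInfty f = L := by
  have hC : vInf (RatFunc.C L) ≤ 1 := by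
    by_cases hL : L = 0
    · simp [hL]
    · exact (vInf_C hL).le
  have hp : Proper f := by
    rw [proper_iff]
    have : f = (f - RatFunc.C L) + RatFunc.C L := by ring
    rw [this]
    exact Valuation.map_add_le _ h.le hC
  refine ⟨hp, ?_⟩
  by_contra hne
  have h2 := lim_spec hp
  have h3 : vInf ((f - RatFunc.C L) - (f - RatFunc.C (limAtInfty f))) < 1 :=
    Valuation.map_sub_lt _ h h2
  have h4 : (f - RatFunc.C L) - (f - RatFunc.C (limAtInfty f)) =
      RatFunc.C (limAtInfty f - L) := by
    rw [map_sub]; ring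
  rw [h4, vInf_C (sub_ne_zero.2 hne)] at h3
  exact lt_irrefl _ h3

/-- Pairs of a proper rational function and its limit. -/
def limRing : Subring (RatFunc ℝ × ℝ) where
  carrier := {p | vInf (p.1 - RatFunc.C p.2) < 1}
  mul_mem' := by
    rintro ⟨f, a⟩ ⟨g, b⟩ hf hg
    simp only [Set.mem_ofPred_eq, Prod.mk_mul_mk] at *
    have hg1 : vInf g ≤ 1 := (proper_iff _).1 (lim_unique hg).1
    have ha : vInf (RatFunc.C a) ≤ 1 := by
      by_cases h : a = 0
      · simp [h]
      · exact (vInf_C h).le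
    have : f * g - RatFunc.C (a * b) =
        (f - RatFunc.C a) * g + RatFunc.C a * (g - RatFunc.C b) := by
      rw [map_mul]; ring
    rw [this]
    apply Valuation.map_add_lt
    · rw [map_mul]; exact lt_of_le_of_lt (mul_le_of_le_one_right' hg1) hf
    · rw [map_mul]; exact lt_of_le_of_lt (mul_le_of_le_one_left' ha) hg
  one_mem' := by simp
  add_mem' := by
    rintro ⟨f, a⟩ ⟨g, b⟩ hf hg
    simp only [Set.mem_ofPred_eq, Prod.mk_add_mk] at *
    have : f + g - RatFunc.C (a + b) = (f - RatFunc.C a) + (g - RatFunc.C b) := by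
      rw [map_add]; ring
    rw [this]
    exact Valuation.map_add_lt _ hf hg
  zero_mem' := by simp
  neg_mem' := by
    rintro ⟨f, a⟩ hf
    simp only [Set.mem_ofPred_eq, Prod.neg_mk] at *
    have : -f - RatFunc.C (-a) = -(f - RatFunc.C a) := by
      rw [map_neg]; ring
    rw [this, Valuation.map_neg]
    exact hf

lemma det_ne_zero_of_lim {m : Type*} [Fintype m] [DecidableEq m]
    (A : Matrix m m (RatFunc ℝ)) (B : Matrix m m ℝ)
    (h : ∀ a b, vInf (A a b - RatFunc.C (B a b)) < 1) (hB : B.det ≠ 0) : A.det ≠ 0 := by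
  let M : Matrix m m limRing := Matrix.of fun a b => ⟨(A a b, B a b), h a b⟩
  have h1 : ((RingHom.fst _ _).comp limRing.subtype) M.det = A.det := by
    rw [RingHom.map_det]; rfl
  have h2 : ((RingHom.snd _ _).comp limRing.subtype) M.det = B.det := by
    rw [RingHom.map_det]; rfl
  have h3 : vInf (A.det - RatFunc.C B.det) < 1 := by
    rw [← h1, ← h2]
    exact M.det.2
  intro h0
  rw [h0, zero_sub, Valuation.map_neg, vInf_C hB] at h3
  exact lt_irrefl _ h3

lemma proper_one_sub {n : ℕ} {G : Matrix (Fin n) (Fin n) (RatFunc ℝ)}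
    (h : ∀ i j : Fin n, Proper (G j i)) (a b : Fin n) : Proper ((1 - G) a b) := by
  rw [proper_iff, Matrix.sub_apply]
  apply Valuation.map_sub_le
  · rw [Matrix.one_apply]; split_ifs <;> simp
  · exact (proper_iff _).1 (h b a)

lemma Admissible.det_ne {n : ℕ} {E : Finset (Fin n × Fin n)}
    {G : Matrix (Fin n) (Fin n) (RatFunc ℝ)} (h : Admissible E G) : (1 - G).det ≠ 0 := by
  have hS := h.2.2 Finset.univ
  have key := det_ne_zero_of_lim ((1 - G).submatrix
    (fun x : {v // v ∈ (Finset.univ : Finset (Fin n))} => (x : Fin n)) (fun x => (x : Fin n))) _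
    (fun a b => lim_spec (proper_one_sub h.1 a b)) hS
  have := Matrix.det_submatrix_equiv_self
    (Equiv.subtypeUnivEquiv (p := fun v => v ∈ (Finset.univ : Finset (Fin n)))
      (fun x => Finset.mem_univ x)) (1 - G)
  rw [← this]
  exact key

lemma rank_eq_card_iff {m k : Type*} [Fintype m] [Fintype k] [DecidableEq k]
    {K : Type*} [Field K] (A : Matrix m k K) :
    A.rank = Fintype.card k ↔ ∀ v, A *ᵥ v = 0 → v = 0 := by
  have h := LinearMap.finrank_range_add_finrank_ker A.mulVecLin
  rw [Module.finrank_fintype_fun_eq_card] at h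
  have h2 : (∀ v, A *ᵥ v = 0 → v = 0) ↔ LinearMap.ker A.mulVecLin = ⊥ := by
    rw [LinearMap.ker_eq_bot']; rfl
  rw [h2, ← Submodule.finrank_eq_zero (R := K), Matrix.rank]
  omega

lemma exists_scale {ι : Type*} [Finite ι] (w : ι → RatFunc ℝ)
    (c : ι → RatFunc ℝ) (hc : ∀ j, c j ≠ 0) :
    ∃ s : RatFunc ℝ, s ≠ 0 ∧ ∀ j, vInf (s * w j) < vInf (c j) := by
  have hev : ∀ᶠ k : ℕ in Filter.atTop, ∀ j,
      vInf (((RatFunc.X : RatFunc ℝ) ^ k)⁻¹ * w j) < vInf (c j) := by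
    rw [Filter.eventually_all]
    intro j
    by_cases hw : w j = 0
    · refine Filter.Eventually.of_forall fun k => ?_
      rw [hw, mul_zero, map_zero, vInf_of_ne (hc j)]
      exact exp_pos
    · filter_upwards [Filter.eventually_gt_atTop
        ((w j).intDegree - (c j).intDegree).toNat] with k hk
      have hX : vInf ((RatFunc.X : RatFunc ℝ) ^ k) = exp (k : ℤ) := by
        have := vInf_poly (p := (Polynomial.X : ℝ[X]) ^ k) (by simp)
        simpa using this
      rw [map_mul, map_inv₀, hX, vInf_of_ne hw, vInf_of_ne (hc j), ← WithZero.exp_neg, ← exp_add,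
        exp_lt_exp]
      omega
  obtain ⟨k, hk⟩ := hev.exists
  exact ⟨_, inv_ne_zero (pow_ne_zero k RatFunc.X_ne_zero), hk⟩

lemma Admissible.perturb {n : ℕ} {E : Finset (Fin n × Fin n)}
    {G H : Matrix (Fin n) (Fin n) (RatFunc ℝ)} (hG : Admissible E G)
    (hlt : ∀ a b, vInf (H a b - G a b) < 1)
    (hnz : ∀ i j, H j i ≠ 0 ↔ (i, j) ∈ E) : Admissible E H := by
  have hlim : ∀ a b, vInf ((1 - H) a b - RatFunc.C (limAtInfty ((1 - G) a b))) < 1 := by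
    intro a b
    have : (1 - H) a b - RatFunc.C (limAtInfty ((1 - G) a b)) =
        ((1 - G) a b - RatFunc.C (limAtInfty ((1 - G) a b))) - (H a b - G a b) := by
      simp only [Matrix.sub_apply]; ring
    rw [this]
    exact Valuation.map_sub_lt _ (lim_spec (proper_one_sub hG.1 a b)) (hlt a b)
  have hM : limMatrix H = limMatrix G := by
    ext a b
    exact (lim_unique (hlim a b)).2
  refine ⟨fun i j => ?_, hnz, ?_⟩
  · rw [proper_iff]
    have : H j i = (H j i - G j i) + G j i := by ring
    rw [this]
    exact Valuation.map_add_le _ (hlt j i).le ((proper_iff _).1 (hG.1 i j))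
  · rw [hM]; exact hG.2.2

lemma mem_Nout {n : ℕ} {E : Finset (Fin n × Fin n)} {i j : Fin n} :
    j ∈ Nout E i ↔ (i, j) ∈ E := by
  simp [Nout]

lemma rank_iff {n : ℕ} (E : Finset (Fin n × Fin n)) (C : Finset (Fin n)) (i : Fin n)
    (T : Matrix (Fin n) (Fin n) (RatFunc ℝ)) :
    (T.submatrix (fun c : {v // v ∈ C} => (c : Fin n))
          (fun j : {v // v ∈ Nout E i} => (j : Fin n))).rank = (Nout E i).card ↔
    ∀ v : Fin n → RatFunc ℝ, (∀ j, (i, j) ∉ E → v j = 0) → (∀ c ∈ C, (T *ᵥ v) c = 0) → v = 0 := by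
  have hcard : (Nout E i).card = Fintype.card {v // v ∈ Nout E i} := by simp
  rw [hcard, rank_eq_card_iff]
  have hsum : ∀ (v : Fin n → RatFunc ℝ) (c : Fin n), (∀ j, (i, j) ∉ E → v j = 0) →
      (T *ᵥ v) c = ∑ j : {v // v ∈ Nout E i}, T c j * v j := by
    intro v c hv
    rw [Finset.sum_coe_sort (Nout E i) (fun j => T c j * v j)]
    simp only [Matrix.mulVec, dotProduct]
    symm
    apply Finset.sum_subset (Finset.subset_univ _)
    intro j _ hj
    rw [hv j (fun h => hj (mem_Nout.2 h)), mul_zero]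
  constructor
  · intro h v hv hT
    have h0 := h (fun j => v j) (by
      ext c
      have := hT c c.2
      rw [hsum v c hv] at this
      exact this)
    ext j
    by_cases hj : (i, j) ∈ E
    · exact congrFun h0 ⟨j, mem_Nout.2 hj⟩
    · exact hv j hj
  · intro h v hv
    let w : Fin n → RatFunc ℝ := fun j => if hj : j ∈ Nout E i then v ⟨j, hj⟩ else 0
    have hw : ∀ j, (i, j) ∉ E → w j = 0 := fun j hj => dif_neg (fun h => hj (mem_Nout.1 h))
    have hwv : ∀ j : {v // v ∈ Nout E i}, w j = v j := fun j => dif_pos j.2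
    have := h w hw (by
      intro c hc
      rw [hsum w c hw]
      simp only [hwv]
      exact congrFun hv ⟨c, hc⟩)
    ext j
    rw [← hwv, this]; rfl

/-- The graph `𝒢` is identifiable from `C` if and only if for every `i ∈ V`
and every admissible network matrix `G`, the submatrix `T_{C, N_i}` of `T = (I - G)⁻¹` has
rank `|N_i|` over `ℝ(z)`. -/
theorem graph_identifiability_iff_rank (n : ℕ) (E : Finset (Fin n × Fin n))
    (hsimple : ∀ v : Fin n, (v, v) ∉ E) (C : Finset (Fin n)) :
    IdentifiableGraph E C ↔
      ∀ i : Fin n, ∀ G : Matrix (Fin n) (Fin n) (RatFunc ℝ), Admissible E G →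
        (((1 - G)⁻¹).submatrix (fun c : {v // v ∈ C} => (c : Fin n))
          (fun j : {v // v ∈ Nout E i} => (j : Fin n))).rank = (Nout E i).card := by
  simp only [rank_iff]
  constructor
  · intro hid i G hG v hv hT
    classical
    by_contra hv0
    -- thresholds: `1` and the entries of the column
    obtain ⟨s, hs, hlt⟩ := exists_scale (ι := Fin n × Bool) (fun p => v p.1)
      (fun p => if p.2 = true ∧ G p.1 i ≠ 0 then G p.1 i else 1) (by
        rintro ⟨j, b⟩
        dsimp only
        split_ifs with h
        · exact h.2
        · exact one_ne_zero)
    have hlt1 : ∀ j, vInf (s * v j) < 1 := fun j => by simpa using hlt (j, false)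
    have hlt2 : ∀ j, G j i ≠ 0 → vInf (s * v j) < vInf (G j i) := fun j hj => by
      simpa [hj] using hlt (j, true)
    set D : Matrix (Fin n) (Fin n) (RatFunc ℝ) :=
      Matrix.of fun a b => if b = i then s * v a else 0 with hD
    have hH : Admissible E (G + D) := by
      apply hG.perturb
      · intro a b
        rw [Matrix.add_apply, add_sub_cancel_left, hD, Matrix.of_apply]
        split_ifs
        · exact hlt1 a
        · simp
      · intro b a
        rw [← hG.2.1 b a, Matrix.add_apply, hD, Matrix.of_apply]
        split_ifs with hb
        · subst hb
          by_cases hz : G a b = 0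
          · have : v a = 0 := hv a (fun h => (hG.2.1 b a).2 h hz)
            simp [hz, this]
          · simp only [ne_eq, hz, not_false_eq_true, iff_true]
            intro h0
            have h1 := hlt2 a hz
            rw [eq_neg_of_add_eq_zero_left h0, Valuation.map_neg] at h1
            exact lt_irrefl _ h1
        · rw [add_zero]
    have hTD : ∀ c ∈ C, ∀ b, ((1 - G)⁻¹ * D) c b = 0 := by
      intro c hc b
      have : ((1 - G)⁻¹ * D) c b = if b = i then s * ((1 - G)⁻¹ *ᵥ v) c else 0 := by
        rw [Matrix.mul_apply, hD]
        split_ifs with hb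
        · simp only [Matrix.of_apply, if_pos hb, Matrix.mulVec, dotProduct, Finset.mul_sum]
          exact Finset.sum_congr rfl fun x _ => by ring
        · simp [hb]
      rw [this, hT c hc]
      simp
    have h1 : (1 - G)⁻¹ * (1 - G) = 1 :=
      Matrix.nonsing_inv_mul _ (isUnit_iff_ne_zero.2 hG.det_ne)
    have h2 : (1 - (G + D)) * (1 - (G + D))⁻¹ = 1 :=
      Matrix.mul_nonsing_inv _ (isUnit_iff_ne_zero.2 hH.det_ne)
    have hdiff : (1 - G)⁻¹ = (1 - (G + D))⁻¹ - (1 - G)⁻¹ * D * (1 - (G + D))⁻¹ := by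
      have e : (1 - G)⁻¹ * (1 - (G + D)) = 1 - (1 - G)⁻¹ * D := by
        
        have e0 : 1 - (G + D) = (1 - G) - D := by abel
        rw [e0, mul_sub, h1]
      calc (1 - G)⁻¹ = (1 - G)⁻¹ * ((1 - (G + D)) * (1 - (G + D))⁻¹) := by rw [h2, mul_one]
        _ = _ := by rw [← mul_assoc, e, sub_mul, one_mul]
    have heq : G = G + D := by
      refine hid G (G + D) hG hH ?_
      ext c b
      simp only [Matrix.submatrix_apply, id]
      conv_lhs => rw [hdiff]
      rw [Matrix.sub_apply, Matrix.mul_apply]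
      simp [hTD c c.2]
    have hD0 : D = 0 := by simpa using heq.symm
    apply hv0
    ext j
    have := congrFun (congrFun hD0 j) i
    simpa [hD, hs] using this
  · intro h G H hG hH hrow
    have h1 : (1 - G)⁻¹ * (1 - G) = 1 :=
      Matrix.nonsing_inv_mul _ (isUnit_iff_ne_zero.2 hG.det_ne)
    have h2 : (1 - H)⁻¹ * (1 - H) = 1 :=
      Matrix.nonsing_inv_mul _ (isUnit_iff_ne_zero.2 hH.det_ne)
    have hrow' : ∀ c ∈ C, ∀ b, (1 - G)⁻¹ c b = (1 - H)⁻¹ c b := fun c hc b =>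
      congrFun (congrFun hrow ⟨c, hc⟩) b
    ext j i
    have := h i G hG (fun j => G j i - H j i) (by
      intro j hj
      have e1 : G j i = 0 := by by_contra h0; exact hj ((hG.2.1 i j).1 h0)
      have e2 : H j i = 0 := by by_contra h0; exact hj ((hH.2.1 i j).1 h0)
      simp [e1, e2]) (by
      intro c hc
      have e1 : ((1 - G)⁻¹ * (1 - H)) c i = ((1 - G)⁻¹ * (1 - G)) c i := by
        rw [h1, ← congrFun (congrFun h2 c) i, Matrix.mul_apply, Matrix.mul_apply]
        exact Finset.sum_congr rfl fun x _ => by rw [hrow' c hc x]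
      have e2 : ((1 - G)⁻¹ *ᵥ fun j => G j i - H j i) c =
          ((1 - G)⁻¹ * ((1 - H) - (1 - G))) c i := by
        rw [Matrix.mul_apply]
        simp only [Matrix.mulVec, dotProduct, Matrix.sub_apply]
        exact Finset.sum_congr rfl fun x _ => by ring
      rw [e2, mul_sub, Matrix.sub_apply, e1, sub_self])
    exact sub_eq_zero.1 (congrFun this j)
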